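/- Let k be an algebraically closed field of characteristic p > 0. Every nonzero finite-dimensional representation of the cyclic group C_p over k is isomorphic to a finite direct sum of copies of the representations L_1, ..., L_p; each L_s is indecomposable; and L_r ≅ L_s if and only if r = s. In particular the L_s, 1 ≤ s ≤ p, exhaust all isomorphism classes of indecomposable finite-dimensional representations of C_p over k. -/

import Mathlib

/-- The nilpotent single Jordan block of size `s` (ones on the superdiagonal). -/
def jordanN (k : Type) [Field k] (s : ℕ) : Matrix (Fin s) (Fin s) k :=
  Matrix.of fun i j => if (i : ℕ) + 1 = (j : ℕ) then 1 else 0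

/-- The generator `σ` of `C_p` acting on `L_s = k^s` as the unipotent Jordan block `1 + N`
(i.e. multiplication by `1 + X` on `k[X]/(X^s)`). -/
def sigmaL (k : Type) [Field k] (s : ℕ) : (Fin s → k) →ₗ[k] (Fin s → k) :=
  ((1 : Matrix (Fin s) (Fin s) k) + jordanN k s).mulVecLin

/-!
If `q` is a power of the characteristic then `(g - 1) ^ q = g ^ q - 1`, so `g ^ q = 1` says exactly
that `N = g - 1` satisfies `N ^ q = 0`. Letting `X` act as `N` turns `V` into a finitely generated
`k[X]`-module killed by `X ^ q`, which by the structure theorem over a principal ideal domain is a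
product of modules `k[X] / (X ^ s)` with `1 ≤ s ≤ q`; on each of these, `X` is a Jordan block.
A Jordan block is indecomposable because it is nilpotent with a kernel of dimension at most one:
every nonzero invariant subspace meets that kernel, so two of them cannot be disjoint.
-/

open Polynomial

/-- Restriction of a dependent family to a set of indices outside of which every component is
trivial, as a linear equivalence. It is used to discard the zero summands `R ⧸ (π ^ 0)`. -/
def piSubtypeLinearEquiv {R ι : Type*} [Semiring R] (M : ι → Type*) [∀ i, AddCommMonoid (M i)]
    [∀ i, Module R (M i)] (P : ι → Prop) [DecidablePred P]
    (hP : ∀ i, ¬ P i → Subsingleton (M i)) :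
    (∀ i, M i) ≃ₗ[R] ∀ i : {i // P i}, M i where
  toFun x i := x i
  map_add' _ _ := rfl
  map_smul' _ _ := rfl
  invFun y i := if h : P i then y ⟨i, h⟩ else 0
  left_inv x := by
    ext i
    by_cases h : P i
    · simp [h]
    · exact (hP i h).elim _ _
  right_inv y := by ext i; simp [i.2]

theorem exists_linearEquiv_pi_quotient_span_pow {R M : Type*} [CommRing R] [IsDomain R]
    [IsPrincipalIdealRing R] [AddCommGroup M] [Module R M] [Module.Finite R M] {π : R}
    (hπ : Irreducible π) {m : ℕ} (hM : ∀ x : M, π ^ m • x = 0) :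
    ∃ (n : ℕ) (f : Fin n → Fin m),
      Nonempty (M ≃ₗ[R] ∀ i, R ⧸ Ideal.span {π ^ ((f i : ℕ) + 1)}) := by
  classical
  obtain ⟨d, s, ⟨E⟩⟩ := Module.torsion_by_prime_power_decomposition hπ
    ((Submodule.isTorsion'_powers_iff π).2 fun x => ⟨m, hM x⟩)
  let E' : M ≃ₗ[R] ∀ i, R ⧸ Ideal.span {π ^ s i} :=
    E ≪≫ₗ DirectSum.linearEquivFunOnFintype R (Fin d) _
  have exponent_le (i : Fin d) : s i ≤ m := by
    have pow_smul_one : π ^ m • (1 : R ⧸ Ideal.span {π ^ s i}) = 0 := by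
      simpa using congrFun (congrArg E' (hM (E'.symm (Pi.single i 1)))) i
    rwa [Algebra.smul_def, mul_one, Ideal.Quotient.algebraMap_eq, Ideal.Quotient.eq_zero_iff_dvd,
      pow_dvd_pow_iff hπ.ne_zero hπ.not_isUnit] at pow_smul_one
  have subsingleton_of_exponent_eq_zero (i : Fin d) (hi : ¬ s i ≠ 0) :
      Subsingleton (R ⧸ Ideal.span {π ^ s i}) := by
    rw [not_not.1 hi, pow_zero, Ideal.span_singleton_one]
    exact Ideal.Quotient.subsingleton_iff.2 rfl
  let c := Fintype.equivFin {i // s i ≠ 0}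
  let f (j) : Fin m := ⟨s (c.symm j) - 1,
    (Nat.sub_one_lt (c.symm j).2).trans_le (exponent_le (c.symm j))⟩
  have exponent_eq (j) : s (c.symm j) = f j + 1 := (Nat.succ_pred (c.symm j).2).symm
  exact ⟨_, f, ⟨E' ≪≫ₗ piSubtypeLinearEquiv _ (s · ≠ 0) subsingleton_of_exponent_eq_zero ≪≫ₗ
    LinearEquiv.piCongrLeft' R _ c ≪≫ₗ
    LinearEquiv.piCongrRight fun j => Submodule.quotEquivOfEq _ _ (by rw [exponent_eq])⟩⟩

section JordanBlock

variable (k : Type) [Field k] (s : ℕ)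

lemma jordanN_mulVecLin_apply (x : Fin s → k) (i : Fin s) :
    (jordanN k s).mulVecLin x i = if h : (i : ℕ) + 1 < s then x ⟨i + 1, h⟩ else 0 := by
  simp only [Matrix.mulVecLin_apply, Matrix.mulVec, dotProduct, jordanN, Matrix.of_apply,
    ite_mul, one_mul, zero_mul]
  split_ifs with h
  · rw [Finset.sum_eq_single_of_mem ⟨i + 1, h⟩ (Finset.mem_univ _) fun j _ hj =>
      if_neg fun hij => hj (Fin.ext hij.symm), if_pos rfl]
  · exact Finset.sum_eq_zero fun j _ => if_neg (by omega)

lemma sigmaL_apply (x : Fin s → k) : sigmaL k s x = x + (jordanN k s).mulVecLin x := by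
  simp [sigmaL]

/-- The first `s` coefficients of a polynomial, highest degree first: the coordinates in which
multiplication by `X` modulo `X ^ s` is the Jordan block `jordanN`. -/
noncomputable def revCoeff : k[X] →ₗ[k] Fin s → k :=
  LinearMap.pi fun i => lcoeff k i.rev

variable {k s}

lemma revCoeff_X_mul (P : k[X]) :
    revCoeff k s (X * P) = (jordanN k s).mulVecLin (revCoeff k s P) := by
  ext i
  rw [jordanN_mulVecLin_apply]
  split_ifs with h
  · have : (i.rev : ℕ) = (⟨i + 1, h⟩ : Fin s).rev + 1 := by simp only [Fin.val_rev]; omega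
    simp only [revCoeff, LinearMap.pi_apply, lcoeff_apply, this, coeff_X_mul]
  · have : (i.rev : ℕ) = 0 := by simp only [Fin.val_rev]; omega
    simp only [revCoeff, LinearMap.pi_apply, lcoeff_apply, this, coeff_X_mul_zero]

lemma revCoeff_X_pow_mul (n : ℕ) (P : k[X]) :
    revCoeff k s (X ^ n * P) = ((jordanN k s).mulVecLin ^ n) (revCoeff k s P) := by
  induction n with
  | zero => simp
  | succ n ih => rw [pow_succ', mul_assoc, revCoeff_X_mul, ih, pow_succ', Module.End.mul_apply]

lemma revCoeff_eq_zero_iff {P : k[X]} : revCoeff k s P = 0 ↔ X ^ s ∣ P := by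
  rw [X_pow_dvd_iff, funext_iff, Fin.revPerm.forall_congr_left]
  simp only [revCoeff, LinearMap.pi_apply, Fin.revPerm_symm, Fin.revPerm_apply, Fin.rev_rev,
    lcoeff_apply, Pi.zero_apply, Fin.forall_iff]

lemma revCoeff_surjective : Function.Surjective (revCoeff k s) := fun x => by
  refine ⟨(degreeLTEquiv k s).symm (x ∘ Fin.rev), funext fun i => ?_⟩
  have := congrFun ((degreeLTEquiv k s).apply_symm_apply (x ∘ Fin.rev)) i.rev
  simpa [revCoeff, degreeLTEquiv] using this

variable (k s) in
/-- The identification of `L_s = k[X] / (X ^ s)` with the coordinate space `k ^ s` by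
`revCoeff`. -/
noncomputable def quotientXPowEquiv :
    (k[X] ⧸ Ideal.span {(X : k[X]) ^ s}) ≃ₗ[k] (Fin s → k) :=
  (Submodule.Quotient.restrictScalarsEquiv k (Ideal.span {(X : k[X]) ^ s})).symm ≪≫ₗ
    Submodule.quotEquivOfEq _ _ (by
      ext P
      simp [Ideal.mem_span_singleton, revCoeff_eq_zero_iff]) ≪≫ₗ
    (revCoeff k s).quotKerEquivOfSurjective revCoeff_surjective

lemma quotientXPowEquiv_X_smul (a : k[X] ⧸ Ideal.span {(X : k[X]) ^ s}) :
    quotientXPowEquiv k s ((X : k[X]) • a) =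
      (jordanN k s).mulVecLin (quotientXPowEquiv k s a) := by
  obtain ⟨P, rfl⟩ := Ideal.Quotient.mk_surjective a
  exact revCoeff_X_mul P

lemma jordanN_mulVecLin_pow_self : (jordanN k s).mulVecLin ^ s = 0 := by
  refine LinearMap.ext fun x => ?_
  obtain ⟨P, rfl⟩ := revCoeff_surjective x
  rw [← revCoeff_X_pow_mul, revCoeff_eq_zero_iff.2 (dvd_mul_right _ _), LinearMap.zero_apply]

lemma rank_ker_jordanN_mulVecLin_le_one :
    Module.rank k (LinearMap.ker (jordanN k s).mulVecLin) ≤ 1 := by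
  cases s with
  | zero => simp
  | succ t =>
    have eval_zero_injective : Function.Injective
        ((LinearMap.proj 0 : (Fin (t + 1) → k) →ₗ[k] k) ∘ₗ
          (LinearMap.ker (jordanN k (t + 1)).mulVecLin).subtype) := by
      refine LinearMap.ker_eq_bot.1 (LinearMap.ker_eq_bot'.2 ?_)
      rintro ⟨x, hx⟩ hx0
      ext i
      cases i using Fin.cases with
      | zero => exact hx0
      | succ j =>
        have hxj : (jordanN k (t + 1)).mulVecLin x j.castSucc = 0 := congrFun hx j.castSucc
        rwa [jordanN_mulVecLin_apply, dif_pos (by simp)] at hxj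
    simpa using LinearMap.rank_le_of_injective _ eval_zero_injective

end JordanBlock

lemma exists_ne_zero_mem_ker_of_isNilpotent {R M : Type*} [Semiring R] [AddCommMonoid M]
    [Module R M] {N : Module.End R M} (hN : IsNilpotent N) {W : Submodule R M}
    (hNW : ∀ x ∈ W, N x ∈ W) (hW : W ≠ ⊥) : ∃ x ∈ W, x ≠ 0 ∧ N x = 0 := by
  by_contra! h
  obtain ⟨x, hxW, hx⟩ := W.ne_bot_iff.1 hW
  have pow_apply_mem_and_ne_zero (n : ℕ) : (N ^ n) x ∈ W ∧ (N ^ n) x ≠ 0 := by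
    induction n with
    | zero => exact ⟨hxW, hx⟩
    | succ n ih =>
      rw [pow_succ', Module.End.mul_apply]
      exact ⟨hNW _ ih.1, h _ ih.1 ih.2⟩
  obtain ⟨n, hn⟩ := hN
  exact (pow_apply_mem_and_ne_zero n).2 (by rw [hn, LinearMap.zero_apply])

theorem eq_bot_or_eq_bot_of_isNilpotent_of_rank_ker_le_one {k V : Type*} [DivisionRing k]
    [AddCommGroup V] [Module k V] {N : Module.End k V} (hN : IsNilpotent N)
    (hker : Module.rank k (LinearMap.ker N) ≤ 1)
    {W₁ W₂ : Submodule k V} (h₁ : ∀ x ∈ W₁, N x ∈ W₁) (h₂ : ∀ x ∈ W₂, N x ∈ W₂)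
    (hW : Disjoint W₁ W₂) : W₁ = ⊥ ∨ W₂ = ⊥ := by
  by_contra! hne
  obtain ⟨x, hxW, hx, hNx⟩ := exists_ne_zero_mem_ker_of_isNilpotent hN h₁ hne.1
  obtain ⟨y, hyW, hy, hNy⟩ := exists_ne_zero_mem_ker_of_isNilpotent hN h₂ hne.2
  obtain ⟨v, hv⟩ := rank_le_one_iff.1 hker
  obtain ⟨a, ha⟩ := hv ⟨x, hNx⟩
  obtain ⟨b, hb⟩ := hv ⟨y, hNy⟩
  obtain rfl : a • (v : V) = x := congrArg Subtype.val ha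
  obtain rfl : b • (v : V) = y := congrArg Subtype.val hb
  have hv₁ : (v : V) ∈ W₁ := (W₁.smul_mem_iff (left_ne_zero_of_smul hx)).1 hxW
  have hv₂ : (v : V) ∈ W₂ := (W₂.smul_mem_iff (left_ne_zero_of_smul hy)).1 hyW
  exact right_ne_zero_of_smul hx (Submodule.disjoint_def.1 hW v hv₁ hv₂)

theorem exists_linearEquiv_pi_jordanN {k : Type} {V : Type*} [Field k] [AddCommGroup V]
    [Module k V] [FiniteDimensional k V] {N : Module.End k V} {m : ℕ} (hN : N ^ m = 0) :
    ∃ (n : ℕ) (f : Fin n → Fin m) (e : V ≃ₗ[k] ∀ i, Fin ((f i : ℕ) + 1) → k),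
      ∀ v i, e (N v) i = (jordanN k (f i + 1)).mulVecLin (e v i) := by
  have hX (x : Module.AEval' N) : (X : k[X]) ^ m • x = 0 := by
    obtain ⟨v, rfl⟩ := (Module.AEval'.of N).surjective x
    rw [Module.AEval'.X_pow_smul_of, hN, zero_smul, map_zero]
  obtain ⟨n, f, ⟨E⟩⟩ := exists_linearEquiv_pi_quotient_span_pow irreducible_X hX
  refine ⟨n, f, Module.AEval'.of N ≪≫ₗ E.restrictScalars k ≪≫ₗ
    LinearEquiv.piCongrRight fun i => quotientXPowEquiv k (f i + 1), fun v i => ?_⟩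
  have hE : E (.of N (N v)) i = (X : k[X]) • E (.of N v) i := by
    rw [← Module.AEval'.X_smul_of, map_smul, Pi.smul_apply]
  simpa [hE] using quotientXPowEquiv_X_smul (E (.of N v) i)

lemma sub_one_pow_expChar_pow_eq_zero {A : Type*} [Ring A] {p : ℕ} [ExpChar A p] {a : A} {n : ℕ}
    (ha : a ^ p ^ n = 1) : (a - 1) ^ p ^ n = 0 := by
  rw [sub_pow_expChar_pow_of_commute p n (Commute.one_right a), ha, one_pow, sub_self]

theorem exists_linearEquiv_pi_sigmaL {k : Type} {V : Type*} [Field k] [AddCommGroup V] [Module k V]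
    [FiniteDimensional k V] {g : Module.End k V} {m : ℕ} (hg : (g - 1) ^ m = 0) :
    ∃ (n : ℕ) (f : Fin n → Fin m) (e : V ≃ₗ[k] ∀ i, Fin ((f i : ℕ) + 1) → k),
      ∀ v, e (g v) = fun i => sigmaL k (f i + 1) (e v i) := by
  obtain ⟨n, f, e, he⟩ := exists_linearEquiv_pi_jordanN hg
  refine ⟨n, f, e, fun v => funext fun i => ?_⟩
  rw [sigmaL_apply, ← he, LinearMap.sub_apply, Module.End.one_apply, map_sub, Pi.sub_apply,
    add_sub_cancel]

theorem eq_bot_or_eq_bot_of_disjoint_of_sigmaL_mem {k : Type} [Field k] {s : ℕ}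
    {W₁ W₂ : Submodule k (Fin s → k)}
    (h₁ : ∀ x ∈ W₁, sigmaL k s x ∈ W₁) (h₂ : ∀ x ∈ W₂, sigmaL k s x ∈ W₂)
    (hW : Disjoint W₁ W₂) : W₁ = ⊥ ∨ W₂ = ⊥ := by
  have jordanN_mem {W : Submodule k (Fin s → k)} (h : ∀ x ∈ W, sigmaL k s x ∈ W) :
      ∀ x ∈ W, (jordanN k s).mulVecLin x ∈ W := fun x hx => by
    simpa [sigmaL_apply] using W.sub_mem (h x hx) hx
  exact eq_bot_or_eq_bot_of_isNilpotent_of_rank_ker_le_one (N := (jordanN k s).mulVecLin)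
    ⟨s, jordanN_mulVecLin_pow_self⟩
    rank_ker_jordanN_mulVecLin_le_one (jordanN_mem h₁) (jordanN_mem h₂) hW

theorem stmt0_general.{u} (k : Type) [Field k] (p : ℕ) [ExpChar k p] (a : ℕ) {q : ℕ}
    (hq : q = p ^ a) :
    (∀ (V : Type u) [AddCommGroup V] [Module k V] [FiniteDimensional k V], Nontrivial V →
      ∀ g : V →ₗ[k] V, g ^ q = 1 →
        ∃ (n : ℕ) (_ : 0 < n) (f : Fin n → Fin q)
          (e : V ≃ₗ[k] (∀ i : Fin n, Fin ((f i : ℕ) + 1) → k)),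
          ∀ v : V, e (g v) = fun i => sigmaL k ((f i : ℕ) + 1) (e v i))
    ∧ (∀ (s : ℕ) (W₁ W₂ : Submodule k (Fin s → k)),
          (∀ x ∈ W₁, sigmaL k s x ∈ W₁) → (∀ x ∈ W₂, sigmaL k s x ∈ W₂) →
          W₁ ⊓ W₂ = ⊥ → W₁ = ⊥ ∨ W₂ = ⊥)
    ∧ (∀ r s : ℕ, (∃ e : (Fin r → k) ≃ₗ[k] (Fin s → k),
            ∀ v, e (sigmaL k r v) = sigmaL k s (e v)) ↔ r = s) := by
  subst hq
  refine ⟨fun V _ _ _ _ g hg => ?_, fun s W₁ W₂ h₁ h₂ hW => ?_, fun r s => ⟨?_, ?_⟩⟩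
  · have : ExpChar (Module.End k V) p :=
      expChar_of_injective_algebraMap (algebraMap k (Module.End k V)).injective p
    obtain ⟨n, f, e, he⟩ := exists_linearEquiv_pi_sigmaL (sub_one_pow_expChar_pow_eq_zero hg)
    refine ⟨n, Nat.pos_of_ne_zero ?_, f, e, he⟩
    rintro rfl
    exact not_subsingleton V e.toEquiv.subsingleton
  · exact eq_bot_or_eq_bot_of_disjoint_of_sigmaL_mem h₁ h₂ (disjoint_iff.2 hW)
  · rintro ⟨e, _⟩
    simpa using e.finrank_eq
  · rintro rfl
    exact ⟨.refl _ _, fun _ => rfl⟩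

/-- Over an algebraically closed field `k` of characteristic `p > 0`:
(1) every nonzero finite-dimensional representation of `C_p` over `k` (given by an
endomorphism `g` with `g^p = 1`) is isomorphic, equivariantly, to a finite direct sum
of copies of `L_1, …, L_p`;
(2) each `L_s` (`1 ≤ s ≤ p`) is indecomposable: it admits no splitting into two nonzero
`σ`-invariant submodules;
(3) `L_r ≅ L_s` (equivariantly) if and only if `r = s`.
In particular the `L_s`, `1 ≤ s ≤ p`, exhaust all isomorphism classes of indecomposable
finite-dimensional representations of `C_p` over `k`. -/
theorem stmt0 (p : ℕ) (hp : p.Prime) (k : Type) [Field k] [IsAlgClosed k] [CharP k p] :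
    (∀ (V : Type) [AddCommGroup V] [Module k V] [FiniteDimensional k V], Nontrivial V →
      ∀ g : V →ₗ[k] V, g ^ p = 1 →
        ∃ (n : ℕ) (_ : 0 < n) (f : Fin n → Fin p)
          (e : V ≃ₗ[k] (∀ i : Fin n, Fin ((f i : ℕ) + 1) → k)),
          ∀ v : V, e (g v) = fun i => sigmaL k ((f i : ℕ) + 1) (e v i))
    ∧ (∀ s : ℕ, 1 ≤ s → s ≤ p →
        ∀ W₁ W₂ : Submodule k (Fin s → k),
          (∀ x ∈ W₁, sigmaL k s x ∈ W₁) → (∀ x ∈ W₂, sigmaL k s x ∈ W₂) →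
          W₁ ⊓ W₂ = ⊥ → W₁ ⊔ W₂ = ⊤ → W₁ = ⊥ ∨ W₂ = ⊥)
    ∧ (∀ r s : ℕ, 1 ≤ r → r ≤ p → 1 ≤ s → s ≤ p →
        ((∃ e : (Fin r → k) ≃ₗ[k] (Fin s → k),
            ∀ v, e (sigmaL k r v) = sigmaL k s (e v)) ↔ r = s)) := by
  have : ExpChar k p := .prime hp
  obtain ⟨h₁, h₂, h₃⟩ := stmt0_general k p 1 (pow_one p).symm
  exact ⟨h₁, fun s _ _ W₁ W₂ hW₁ hW₂ h _ => h₂ s W₁ W₂ hW₁ hW₂ h, fun r s _ _ _ _ => h₃ r s⟩
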